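/- For every c > 0 there exists a unique x > 0 satisfying x = c · φ(x)/Φ(x), and this solution satisfies x < c·√(2/π). (Existence, uniqueness and bound for the first-order condition h'ₙ(α₀) = 0 in Proposition 6 (pro_PP) and Corollary 7 (cor_PP), where c = (K−2)/2 and x = √n(α₀−p)/√p.) -/

import Mathlib

/-- The standard normal density `φ(x) = (1/√(2π)) e^{-x²/2}`. -/
noncomputable def stdNormalPDF (x : ℝ) : ℝ := (1 / Real.sqrt (2 * Real.pi)) * Real.exp (-x ^ 2 / 2)

/-- The standard normal cumulative distribution function `Φ(x) = ∫_{-∞}^x φ(t) dt`. -/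
noncomputable def stdNormalCDF (x : ℝ) : ℝ := ∫ t in Set.Iic x, stdNormalPDF t

/-!
On `[0, ∞)` the density `φ` strictly decreases while `Φ` strictly increases, so `g = c · φ / Φ` is
continuous and strictly antitone there with `0 < g 0`. Since `g (g 0) ≤ g 0`, the intermediate value
theorem gives a fixed point `x` between `0` and `g 0`; it is unique by antitonicity, and
`x = g x < g 0 = c · √(2 / π)`, where `Φ 0 = 1 / 2` by symmetry.
-/

open Set MeasureTheory ProbabilityTheory Function

theorem eq_of_isFixedPt_of_antitoneOn {α : Type*} [LinearOrder α] {f : α → α} {s : Set α}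
    (hf : AntitoneOn f s) {x y : α} (hxs : x ∈ s) (hys : y ∈ s) (hx : IsFixedPt f x)
    (hy : IsFixedPt f y) : x = y := by
  wlog hxy : x ≤ y generalizing x y
  · exact (this hys hxs hy hx (le_of_not_ge hxy)).symm
  · refine hxy.antisymm ?_
    calc y = f y := hy.symm
      _ ≤ f x := hf hxs hys hxy
      _ = x := hx

theorem existsUnique_isFixedPt_of_antitoneOn {α : Type*} [ConditionallyCompleteLinearOrder α]
    [DenselyOrdered α] [TopologicalSpace α] [OrderTopology α] {f : α → α} {a : α}
    (hcont : ContinuousOn f (Ici a)) (hanti : AntitoneOn f (Ici a)) (ha : a < f a) :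
    ∃! x, a < x ∧ IsFixedPt f x := by
  have hfa : f (f a) ≤ f a := hanti self_mem_Ici ha.le ha.le
  obtain ⟨x, ⟨hax, -⟩, hx⟩ :=
    exists_mem_Icc_isFixedPt (hcont.mono Icc_subset_Ici_self) ha.le ha.le hfa
  have hne : a ≠ x := by
    rintro rfl
    exact ha.ne' hx
  exact ⟨x, ⟨hax.lt_of_ne hne, hx⟩, fun y ⟨hay, hy⟩ =>
    eq_of_isFixedPt_of_antitoneOn hanti hay.le hax hy hx⟩

theorem continuous_setIntegral_Iic {E : Type*} [NormedAddCommGroup E] [NormedSpace ℝ E]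
    {μ : Measure ℝ} [NullSingletonClass μ] {f : ℝ → E} (hf : Integrable f μ) :
    Continuous fun x => ∫ t in Iic x, f t ∂μ :=
  continuous_iff_continuousAt.2 fun x =>
    hf.integrableOn.continuousOn_Iic_primitive_Iic.continuousAt (Iic_mem_nhds (lt_add_one x))

theorem strictMono_setIntegral_Iic {f : ℝ → ℝ} (hf : Integrable f) (hpos : ∀ x, 0 < f x) :
    StrictMono fun x => ∫ t in Iic x, f t := by
  intro a b hab
  rw [← sub_pos, intervalIntegral.integral_Iic_sub_Iic hf.integrableOn hf.integrableOn]
  exact intervalIntegral.intervalIntegral_pos_of_pos hf.intervalIntegrable hpos hab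

theorem setIntegral_Iic_neg_add_setIntegral_Iic_of_even {E : Type*} [NormedAddCommGroup E]
    [NormedSpace ℝ E] {f : ℝ → E} (hf : Integrable f) (heven : f.Even) (x : ℝ) :
    (∫ t in Iic (-x), f t) + ∫ t in Iic x, f t = ∫ t, f t := by
  have hreflect : ∫ t in Iic (-x), f t = ∫ t in Ioi x, f t := by
    simpa only [heven _, neg_neg] using integral_comp_neg_Iic (-x) f
  rw [hreflect, add_comm, intervalIntegral.integral_Iic_add_Ioi hf.integrableOn hf.integrableOn]

theorem stdNormalPDF_eq_gaussianPDFReal : stdNormalPDF = gaussianPDFReal 0 1 := by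
  ext x
  simp [stdNormalPDF, gaussianPDFReal]

theorem stdNormalPDF_pos (x : ℝ) : 0 < stdNormalPDF x :=
  stdNormalPDF_eq_gaussianPDFReal ▸ gaussianPDFReal_pos 0 1 x one_ne_zero

theorem integrable_stdNormalPDF : Integrable stdNormalPDF :=
  stdNormalPDF_eq_gaussianPDFReal ▸ integrable_gaussianPDFReal 0 1

theorem integral_stdNormalPDF : ∫ x, stdNormalPDF x = 1 :=
  stdNormalPDF_eq_gaussianPDFReal ▸ integral_gaussianPDFReal_eq_one 0 one_ne_zero

theorem continuous_stdNormalPDF : Continuous stdNormalPDF := by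
  unfold stdNormalPDF
  fun_prop

theorem even_stdNormalPDF : stdNormalPDF.Even := fun x => by
  simp only [stdNormalPDF, neg_sq]

theorem strictAntiOn_stdNormalPDF : StrictAntiOn stdNormalPDF (Ici 0) := by
  intro x (hx : 0 ≤ x) y _ hxy
  unfold stdNormalPDF
  gcongr

theorem two_mul_stdNormalPDF_zero : 2 * stdNormalPDF 0 = Real.sqrt (2 / Real.pi) := by
  have hratio : 2 / Real.pi = 2 ^ 2 / (2 * Real.pi) := by field_simp
  rw [hratio, Real.sqrt_div (by positivity), Real.sqrt_sq zero_le_two]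
  simp [stdNormalPDF, div_eq_mul_inv]

theorem continuous_stdNormalCDF : Continuous stdNormalCDF :=
  continuous_setIntegral_Iic integrable_stdNormalPDF

theorem strictMono_stdNormalCDF : StrictMono stdNormalCDF :=
  strictMono_setIntegral_Iic integrable_stdNormalPDF stdNormalPDF_pos

theorem stdNormalCDF_pos (x : ℝ) : 0 < stdNormalCDF x :=
  calc 0 ≤ stdNormalCDF (x - 1) := integral_nonneg fun t => (stdNormalPDF_pos t).le
    _ < stdNormalCDF x := strictMono_stdNormalCDF (sub_one_lt x)

theorem stdNormalCDF_neg_add (x : ℝ) : stdNormalCDF (-x) + stdNormalCDF x = 1 :=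
  (setIntegral_Iic_neg_add_setIntegral_Iic_of_even integrable_stdNormalPDF even_stdNormalPDF
    x).trans integral_stdNormalPDF

theorem stdNormalCDF_zero : stdNormalCDF 0 = 1 / 2 := by
  have h := stdNormalCDF_neg_add 0
  rw [neg_zero] at h
  linarith

theorem continuous_stdNormalPDF_div_stdNormalCDF :
    Continuous fun x => stdNormalPDF x / stdNormalCDF x :=
  continuous_stdNormalPDF.div continuous_stdNormalCDF fun x => (stdNormalCDF_pos x).ne'

theorem strictAntiOn_stdNormalPDF_div_stdNormalCDF :
    StrictAntiOn (fun x => stdNormalPDF x / stdNormalCDF x) (Ici 0) := fun _ hx _ hy hxy =>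
  div_lt_div₀ (strictAntiOn_stdNormalPDF hx hy hxy) (strictMono_stdNormalCDF hxy).le
    (stdNormalPDF_pos _).le (stdNormalCDF_pos _)

theorem stdNormalPDF_zero_div_stdNormalCDF_zero :
    stdNormalPDF 0 / stdNormalCDF 0 = Real.sqrt (2 / Real.pi) := by
  rw [stdNormalCDF_zero, ← two_mul_stdNormalPDF_zero]
  ring

/-- **First-order condition in Proposition 6 / Corollary 7.** For every `c > 0` there is a
unique `x > 0` with `x = c·φ(x)/Φ(x)`, and this solution satisfies `x < c·√(2/π)`. -/
theorem foc_exists_unique (c : ℝ) (hc : 0 < c) :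
    (∃! x : ℝ, 0 < x ∧ x = c * (stdNormalPDF x / stdNormalCDF x))
    ∧ ∀ x : ℝ, 0 < x → x = c * (stdNormalPDF x / stdNormalCDF x) →
        x < c * Real.sqrt (2 / Real.pi) := by
  set g : ℝ → ℝ := fun x => c * (stdNormalPDF x / stdNormalCDF x)
  have hcont : Continuous g := continuous_const.mul continuous_stdNormalPDF_div_stdNormalCDF
  have hanti : StrictAntiOn g (Ici 0) := fun _ hx _ hy hxy =>
    mul_lt_mul_of_pos_left (strictAntiOn_stdNormalPDF_div_stdNormalCDF hx hy hxy) hc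
  have hg0 : g 0 = c * Real.sqrt (2 / Real.pi) :=
    congrArg (c * ·) stdNormalPDF_zero_div_stdNormalCDF_zero
  have hg0_pos : 0 < g 0 := mul_pos hc (div_pos (stdNormalPDF_pos 0) (stdNormalCDF_pos 0))
  refine ⟨?_, fun x hx hfix => ?_⟩
  · simpa only [IsFixedPt, eq_comm] using
      existsUnique_isFixedPt_of_antitoneOn hcont.continuousOn hanti.antitoneOn hg0_pos
  · calc x = g x := hfix
      _ < g 0 := hanti self_mem_Ici hx.le hx
      _ = c * Real.sqrt (2 / Real.pi) := hg0
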